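/- For every point x of the diagram D, the vector w_L = xp + Σ_{l incident to x} l (the sum running over the three lines incident to x) is independent of the choice of the point x; moreover ⟨w_L, w_L⟩ = 2. -/

import Mathlib

/- Formalization over the ring ℋ of Hurwitz integers inside the real quaternions. -/

noncomputable section
open Quaternion Finset

/-- The real quaternions ℍ. -/
abbrev Quat := Quaternion ℝ

/-- The quaternion `i`. -/
def qi : Quat := ⟨0, 1, 0, 0⟩
/-- The quaternion `j`. -/
def qj : Quat := ⟨0, 0, 1, 0⟩
/-- The quaternion `k`. -/
def qk : Quat := ⟨0, 0, 0, 1⟩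
/-- `p = 1 - i`. -/
def qp : Quat := 1 - qi

/-- A quaternion is a Hurwitz integer if it is `(a+bi+cj+dk)/2` with
`a,b,c,d` integers which are all congruent mod `2`. -/
def IsHurwitz (q : Quat) : Prop :=
  ∃ a b c d : ℤ, a % 2 = b % 2 ∧ b % 2 = c % 2 ∧ c % 2 = d % 2 ∧
    q = ⟨(a : ℝ) / 2, (b : ℝ) / 2, (c : ℝ) / 2, (d : ℝ) / 2⟩

/-- A unit of the ring ℋ of Hurwitz integers. -/
def IsUnitH (q : Quat) : Prop :=
  IsHurwitz q ∧ ∃ r : Quat, IsHurwitz r ∧ q * r = 1 ∧ r * q = 1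

/-- Membership in the (two-sided) ideal `pℋ`. -/
def InPH (q : Quat) : Prop := ∃ h : Quat, IsHurwitz h ∧ q = qp * h

/-- The ambient space of the lattice `L = 3E₈ ⊕ H`: three pairs (the `E₈` summands)
together with the two coordinates of the hyperbolic cell `H`. -/
abbrev V3 : Type := (Fin 3 → Quat × Quat) × Quat × Quat

/-- The ℋ-valued form on `3E₈ ⊕ H`:  negative definite standard form on each `E₈`
summand and the hyperbolic form `⟨(x₁,x₂),(y₁,y₂)⟩ = x̄₁ p̄ y₂ + x̄₂ p y₁` on `H`. -/
def ip3 (x y : V3) : Quat :=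
  (∑ s : Fin 3, (-(star (x.1 s).1 * (y.1 s).1) - star (x.1 s).2 * (y.1 s).2))
    + star x.2.1 * star qp * y.2.2 + star x.2.2 * qp * y.2.1

/-- Membership in the `E₈` lattice: both coordinates Hurwitz and congruent mod `pℋ`. -/
def memE8 (q : Quat × Quat) : Prop := IsHurwitz q.1 ∧ IsHurwitz q.2 ∧ InPH (q.1 - q.2)

/-- Membership in the lattice `L = 3E₈ ⊕ H`. -/
def memL3 (v : V3) : Prop := (∀ s, memE8 (v.1 s)) ∧ IsHurwitz v.2.1 ∧ IsHurwitz v.2.2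

/-- Right scalar multiplication on the ambient space of `3E₈ ⊕ H`. -/
def rmul3 (v : V3) (q : Quat) : V3 :=
  (fun s => ((v.1 s).1 * q, (v.1 s).2 * q), v.2.1 * q, v.2.2 * q)

/-- The `μ`-reflection in a root `r` : `v ↦ v − r(1−μ)⟨r,v⟩/|r|²`. -/
def refl3 (r : V3) (μ : Quat) (v : V3) : V3 := v - rmul3 r ((1 - μ) * ip3 r v / ip3 r r)

/-- The root `a` of the diagram `D`. -/
def rootA : V3 := (fun _ => (0, 0), 1, -1)
/-- The roots `c_s` of the diagram `D`. -/
def rootC (s : Fin 3) : V3 := (fun t => if t = s then ((1 : Quat), (-1 : Quat)) else 0, 0, 0)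
/-- The roots `e_s` of the diagram `D` (with `(1,1)` in the two other `E₈` slots). -/
def rootE (s : Fin 3) : V3 := (fun t => if t = s then (0 : Quat × Quat) else (1, 1), -qi, -1)
/-- The root `f` of the diagram `D`. -/
def rootF : V3 := (fun _ => (0, qp), -(qi * qp), -qp)
/-- The roots `b_s` of the diagram `D`. -/
def rootB (s : Fin 3) : V3 := (fun t => if t = s then ((0 : Quat), qp) else 0, -1, 0)
/-- The roots `d_s` of the diagram `D`. -/
def rootD (s : Fin 3) : V3 := (fun t => if t = s then (-qp, (0 : Quat)) else 0, 0, 0)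

/-- The set of roots of `L`. -/
def Roots3 : Set V3 := {r | memL3 r ∧ ip3 r r = -2}

/-- The reflection group `R(L)` of `L = 3E₈ ⊕ H`, as the subgroup of permutations of the
ambient space generated by the `μ`-reflections in all roots of `L` (for all units `μ ≠ 1`). -/
def RL3 : Subgroup (Equiv.Perm V3) :=
  Subgroup.closure {g | ∃ r μ, r ∈ Roots3 ∧ IsUnitH μ ∧ μ ≠ 1 ∧ ∀ v, g v = refl3 r μ v}

/-- The seven `points` of the diagram `D`. -/
def Pt : Fin 7 → V3 := ![rootA, rootC 0, rootC 1, rootC 2, rootE 0, rootE 1, rootE 2]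
/-- The seven `lines` of the diagram `D`. -/
def Ln : Fin 7 → V3 := ![rootF, rootB 0, rootB 1, rootB 2, rootD 0, rootD 1, rootD 2]

open Classical in
/-- `w_P = l p̄ + Σ_{x incident to l} x`, computed from the line `Ln s`. -/
def wPof (s : Fin 7) : V3 :=
  rmul3 (Ln s) (star qp) + ∑ t : Fin 7, if ip3 (Pt t) (Ln s) = qp then Pt t else 0

open Classical in
/-- `w_L = x p + Σ_{l incident to x} l`, computed from the point `Pt t`. -/
def wLof (t : Fin 7) : V3 :=
  rmul3 (Pt t) qp + ∑ s : Fin 7, if ip3 (Pt t) (Ln s) = qp then Ln s else 0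

/-- The incidence relation between the points and the lines of `D`. -/
def incD : Fin 7 → Fin 7 → Bool :=
  ![![false, true, true, true, false, false, false],
    ![true, true, false, false, true, false, false],
    ![true, false, true, false, false, true, false],
    ![true, false, false, true, false, false, true],
    ![false, true, false, false, false, true, true],
    ![false, false, true, false, true, false, true],
    ![false, false, false, true, true, true, false]]

/-- The common value of `w_L`. -/
def wLval : V3 := (fun _ => (0, qp), -2 - qi, -qp)

@[simp] lemma qi_re : qi.re = 0 := rfl
@[simp] lemma qi_imI : qi.imI = 1 := rfl
@[simp] lemma qi_imJ : qi.imJ = 0 := rfl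
@[simp] lemma qi_imK : qi.imK = 0 := rfl
@[simp] lemma qp_re : qp.re = 1 := by simp [qp]
@[simp] lemma qp_imI : qp.imI = -1 := by simp [qp]
@[simp] lemma qp_imJ : qp.imJ = 0 := by simp [qp]
@[simp] lemma qp_imK : qp.imK = 0 := by simp [qp]
@[simp] lemma two_re : (2 : Quat).re = 2 := by
  rw [← one_add_one_eq_two]; simp <;> norm_num
@[simp] lemma two_imI : (2 : Quat).imI = 0 := by
  rw [← one_add_one_eq_two]; simp
@[simp] lemma two_imJ : (2 : Quat).imJ = 0 := by
  rw [← one_add_one_eq_two]; simp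
@[simp] lemma two_imK : (2 : Quat).imK = 0 := by
  rw [← one_add_one_eq_two]; simp

lemma qp_ne_zero : qp ≠ 0 := by
  intro h
  have := congrArg QuaternionAlgebra.re h
  simp at this

set_option maxHeartbeats 4000000 in
lemma ip_Pt_Ln (t s : Fin 7) : ip3 (Pt t) (Ln s) = if incD t s then qp else 0 := by
  fin_cases t <;> fin_cases s <;>
    simp [Pt, Ln, incD, ip3, rootA, rootC, rootE, rootF, rootB, rootD, Fin.sum_univ_three] <;>
    (ext <;> simp <;> norm_num)

lemma ip_iff (t s : Fin 7) : ip3 (Pt t) (Ln s) = qp ↔ incD t s = true := by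
  rw [ip_Pt_Ln]
  cases incD t s <;> simp [qp_ne_zero.symm]

set_option maxHeartbeats 4000000 in
lemma wLof_eq (t : Fin 7) : wLof t = wLval := by
  unfold wLof
  simp only [ip_iff]
  rw [Fin.sum_univ_seven]
  refine Prod.ext (funext fun u => ?_) (Prod.ext ?_ ?_)
  · fin_cases t <;> fin_cases u <;>
      simp [Pt, Ln, incD, rmul3, wLval, rootA, rootC, rootE, rootF, rootB, rootD]
  · fin_cases t <;>
      simp [Pt, Ln, incD, rmul3, wLval, rootA, rootC, rootE, rootF, rootB, rootD] <;>
      (ext <;> simp <;> norm_num)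
  · fin_cases t <;>
      simp [Pt, Ln, incD, rmul3, wLval, rootA, rootC, rootE, rootF, rootB, rootD]

/-- The vector `w_L = x p + Σ_{l incident to x} l` does not depend on
the choice of the point `x`, and has norm `2`. -/
theorem wL_well_defined_norm_two :
    (∀ t t' : Fin 7, wLof t = wLof t') ∧
    (∀ t : Fin 7, ip3 (wLof t) (wLof t) = 2) := by
  refine ⟨fun t t' => by rw [wLof_eq, wLof_eq], fun t => ?_⟩
  rw [wLof_eq]
  simp only [ip3, wLval, Fin.sum_univ_three]
  ext <;> simp <;> norm_num
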